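/- arXiv:0802.3539 — 2 statements merged into one kernel-verified Lean document; each statement's English description precedes it below -/
import Mathlib

section
/- Fix μ ∈ (0,1). The function ε ↦ ℋ((1 + ε)μ, μ) is strictly monotonically decreasing with respect to ε on the interval (0, 1/μ − 1). Similarly, the function ε ↦ ℋ((1 − ε)μ, μ) is strictly monotonically decreasing with respect to ε on the interval (0, 1). -/
/-- The function ℋ(z, μ) = ln(μ/z) + (1/z − 1)·ln((1 − μ)/(1 − z)). -/
noncomputable def Hfun (z μ : ℝ) : ℝ :=
  Real.log (μ / z) + (1 / z - 1) * Real.log ((1 - μ) / (1 - z))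

/-!
Differentiating `Hfun z μ` in `z`, the contributions `-1/z` and `(1/z - 1) / (1 - z)` of the two
logarithms cancel, leaving `∂ℋ/∂z = log ((1 - z) / (1 - μ)) / z²`. This is positive for `z < μ`
and negative for `z > μ`, so `ℋ(·, μ)` decreases as `z` moves away from `μ` in either direction.
-/

theorem hasDerivAt_log_const_div {a x : ℝ} (ha : a ≠ 0) (hx : x ≠ 0) :
    HasDerivAt (fun y => Real.log (a / y)) (-(1 / x)) x := by
  have h_div : HasDerivAt (fun y => a / y) (a * -(x ^ 2)⁻¹) x := by
    simpa only [div_eq_mul_inv] using (hasDerivAt_inv hx).const_mul a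
  refine (h_div.log (div_ne_zero ha hx)).congr_deriv ?_
  field_simp

theorem hasDerivAt_Hfun {μ z : ℝ} (hμ₀ : μ ≠ 0) (hμ₁ : μ ≠ 1) (hz₀ : z ≠ 0) (hz₁ : z ≠ 1) :
    HasDerivAt (fun z => Hfun z μ) (Real.log ((1 - z) / (1 - μ)) / z ^ 2) z := by
  have h_one_sub_z : 1 - z ≠ 0 := sub_ne_zero.mpr hz₁.symm
  have h_log : HasDerivAt (fun z => Real.log (μ / z)) (-(1 / z)) z :=
    hasDerivAt_log_const_div hμ₀ hz₀
  have h_coeff : HasDerivAt (fun z : ℝ => 1 / z - 1) (-(z ^ 2)⁻¹) z := by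
    simpa only [one_div] using (hasDerivAt_inv hz₀).sub_const 1
  have h_log_compl : HasDerivAt (fun z => Real.log ((1 - μ) / (1 - z))) (1 / (1 - z)) z := by
    simpa only [neg_neg] using
      (hasDerivAt_log_const_div (sub_ne_zero.mpr hμ₁.symm) h_one_sub_z).comp_const_sub 1 z
  refine (h_log.add (h_coeff.mul h_log_compl)).congr_deriv ?_
  rw [← inv_div (1 - μ) (1 - z), Real.log_inv]
  field_simp
  ring

theorem strictAntiOn_Hfun_Ico {μ : ℝ} (hμ : 0 < μ) :
    StrictAntiOn (fun z => Hfun z μ) (Set.Ico μ 1) := by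
  have h_deriv : ∀ z ∈ Set.Ico μ 1,
      HasDerivAt (fun z => Hfun z μ) (Real.log ((1 - z) / (1 - μ)) / z ^ 2) z := fun z hz =>
    hasDerivAt_Hfun hμ.ne' (hz.1.trans_lt hz.2).ne (hμ.trans_le hz.1).ne' hz.2.ne
  refine strictAntiOn_of_deriv_neg (convex_Ico μ 1)
    (fun z hz => (h_deriv z hz).continuousAt.continuousWithinAt) fun z hz => ?_
  rw [interior_Ico] at hz
  rw [(h_deriv z (Set.Ioo_subset_Ico_self hz)).deriv]
  obtain ⟨hμz, hz₁⟩ := hz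
  have h_one_sub_μ : 0 < 1 - μ := sub_pos.mpr (hμz.trans hz₁)
  have h_ratio : (1 - z) / (1 - μ) < 1 := (div_lt_one h_one_sub_μ).mpr (by linarith)
  exact div_neg_of_neg_of_pos
    (Real.log_neg (div_pos (sub_pos.mpr hz₁) h_one_sub_μ) h_ratio) (pow_pos (hμ.trans hμz) 2)

theorem strictMonoOn_Hfun_Ioc {μ : ℝ} (hμ : μ < 1) :
    StrictMonoOn (fun z => Hfun z μ) (Set.Ioc 0 μ) := by
  have h_deriv : ∀ z ∈ Set.Ioc 0 μ,
      HasDerivAt (fun z => Hfun z μ) (Real.log ((1 - z) / (1 - μ)) / z ^ 2) z := fun z hz =>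
    hasDerivAt_Hfun (hz.1.trans_le hz.2).ne' hμ.ne hz.1.ne' (hz.2.trans_lt hμ).ne
  refine strictMonoOn_of_deriv_pos (convex_Ioc 0 μ)
    (fun z hz => (h_deriv z hz).continuousAt.continuousWithinAt) fun z hz => ?_
  rw [interior_Ioc] at hz
  rw [(h_deriv z (Set.Ioo_subset_Ioc_self hz)).deriv]
  obtain ⟨hz₀, hzμ⟩ := hz
  have h_ratio : 1 < (1 - z) / (1 - μ) := (one_lt_div (sub_pos.mpr hμ)).mpr (by linarith)
  exact div_pos (Real.log_pos h_ratio) (pow_pos hz₀ 2)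

theorem stmt_4 (μ : ℝ) (hμ : μ ∈ Set.Ioo (0 : ℝ) 1) :
    StrictAntiOn (fun ε : ℝ => Hfun ((1 + ε) * μ) μ) (Set.Ioo 0 (1 / μ - 1)) ∧
    StrictAntiOn (fun ε : ℝ => Hfun ((1 - ε) * μ) μ) (Set.Ioo 0 1) := by
  obtain ⟨hμ₀, hμ₁⟩ := hμ
  constructor
  · have h_mono : StrictMono fun ε : ℝ => (1 + ε) * μ :=
      (strictMono_id.const_add 1).mul_const hμ₀
    have h_maps : Set.MapsTo (fun ε : ℝ => (1 + ε) * μ) (Set.Ioo 0 (1 / μ - 1)) (Set.Ico μ 1) :=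
      fun ε hε => ⟨le_mul_of_one_le_left hμ₀.le (by linarith [hε.1]),
        (lt_div_iff₀ hμ₀).mp (by linarith [hε.2])⟩
    exact (strictAntiOn_Hfun_Ico hμ₀).comp_strictMonoOn (h_mono.strictMonoOn _) h_maps
  · have h_anti : StrictAnti fun ε : ℝ => (1 - ε) * μ := fun ε δ hεδ =>
      mul_lt_mul_of_pos_right (sub_lt_sub_left hεδ 1) hμ₀
    have h_maps : Set.MapsTo (fun ε : ℝ => (1 - ε) * μ) (Set.Ioo 0 1) (Set.Ioc 0 μ) :=
      fun ε hε => ⟨mul_pos (sub_pos.mpr hε.2) hμ₀,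
        mul_le_of_le_one_left hμ₀.le (by linarith [hε.1])⟩
    exact (strictMonoOn_Hfun_Ioc hμ₁).comp_strictAntiOn (h_anti.strictAntiOn _) h_maps
end

section
/- Fix γ > 0, μ ∈ (0,1), and δ ∈ (0,1). Then there exists ε* ∈ ( μ/(γ + μ), 1 ) such that ℋ( γ/(γ/(μ(1 − ε*)) − 1), μ ) = ln(δ/2)/γ. -/
/-!
The product `z * Hfun z μ` is minus the Kullback–Leibler divergence of the Bernoulli laws with
parameters `z` and `μ`, so it extends continuously to `z = 0`, where its value `log (1 - μ)` is
negative, and it vanishes at `z = μ`. For `c < 0` it therefore crosses the line `c * z` strictly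
between `0` and `μ`. The substitution `z = γ / (γ / (μ * (1 - ε)) - 1)`, which says
`1 / (μ * (1 - ε)) = 1 / γ + 1 / z`, maps `(μ / (γ + μ), 1)` onto `(0, μ)`.
-/

open Set

theorem Hfun_self (μ : ℝ) : Hfun μ μ = 0 := by
  have log_div_self (x : ℝ) : Real.log (x / x) = 0 := by
    rcases eq_or_ne x 0 with rfl | hx <;> simp [*]
  simp only [Hfun, log_div_self, mul_zero, add_zero]

theorem mul_Hfun {z μ : ℝ} (hz₀ : z ≠ 0) (hz₁ : z ≠ 1) (hμ₀ : μ ≠ 0) (hμ₁ : μ ≠ 1) :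
    z * Hfun z μ = z * Real.log μ + (1 - z) * Real.log (1 - μ) + Real.binEntropy z := by
  rw [Hfun, Real.log_div hμ₀ hz₀, Real.log_div (sub_ne_zero.2 hμ₁.symm) (sub_ne_zero.2 hz₁.symm),
    Real.binEntropy, Real.log_inv, Real.log_inv]
  field_simp
  ring

theorem surjOn_Hfun {μ : ℝ} (hμ : μ ∈ Ioo (0 : ℝ) 1) :
    SurjOn (fun z ↦ Hfun z μ) (Ioo 0 μ) (Iio 0) := by
  intro c hc
  let gap : ℝ → ℝ := fun z ↦
    z * Real.log μ + (1 - z) * Real.log (1 - μ) + Real.binEntropy z - z * c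
  have gap_eq {z : ℝ} (hz : z ∈ Ioc 0 μ) : gap z = z * (Hfun z μ - c) := by
    rw [mul_sub, mul_Hfun hz.1.ne' (hz.2.trans_lt hμ.2).ne hμ.1.ne' hμ.2.ne]
  have gap_continuous : Continuous gap := by fun_prop
  have gap_zero_neg : gap 0 < 0 := by
    simpa [gap] using Real.log_neg (sub_pos.2 hμ.2) (sub_lt_self 1 hμ.1)
  have gap_self_pos : 0 < gap μ := by
    rw [gap_eq (right_mem_Ioc.2 hμ.1), Hfun_self]
    exact mul_pos hμ.1 (sub_pos.2 hc)
  obtain ⟨z, hz, hgap⟩ :=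
    intermediate_value_Ioo hμ.1.le gap_continuous.continuousOn ⟨gap_zero_neg, gap_self_pos⟩
  rw [gap_eq (Ioo_subset_Ioc_self hz)] at hgap
  exact ⟨z, hz, sub_eq_zero.1 ((mul_eq_zero_iff_left hz.1.ne').1 hgap)⟩

section Reparametrization

variable {K : Type*} [Field K]

theorem div_div_mul_div_add_sub_one {γ z : K} (hγ : γ ≠ 0) (hz : z ≠ 0) :
    γ / (γ / (γ * z / (γ + z)) - 1) = z := by
  rw [div_div_eq_mul_div, mul_div_mul_left _ _ hγ, add_div, div_self hz, add_sub_cancel_right,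
    div_div_cancel₀ hγ]

variable [LinearOrder K] [IsStrictOrderedRing K]

theorem surjOn_div_div_mul_one_sub_sub_one {γ : K} (hγ : 0 < γ) (μ : K) :
    SurjOn (fun ε ↦ γ / (γ / (μ * (1 - ε)) - 1)) (Ioo (μ / (γ + μ)) 1) (Ioo 0 μ) := by
  rintro z ⟨hz, hzμ⟩
  have hμ : 0 < μ := hz.trans hzμ
  refine ⟨1 - γ * z / (γ + z) / μ, ⟨?_, sub_lt_self 1 (by positivity)⟩, ?_⟩
  · rw [lt_sub_comm, one_sub_div (by positivity), add_sub_cancel_right, div_lt_iff₀ hμ,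
      div_mul_eq_mul_div, div_lt_div_iff₀ (by positivity) (by positivity)]
    have : γ * γ * z < γ * γ * μ := by gcongr
    linear_combination this
  · simp only [sub_sub_cancel, mul_div_cancel₀ _ hμ.ne']
    exact div_div_mul_div_add_sub_one hγ.ne' hz.ne'

end Reparametrization

theorem stmt_8_general {γ : ℝ} (hγ : 0 < γ) {μ : ℝ} (hμ : μ ∈ Ioo (0 : ℝ) 1)
    {c : ℝ} (hc : c < 0) :
    ∃ ε ∈ Ioo (μ / (γ + μ)) 1, Hfun (γ / (γ / (μ * (1 - ε)) - 1)) μ = c :=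
  (surjOn_Hfun hμ).comp (surjOn_div_div_mul_one_sub_sub_one hγ μ) hc

theorem stmt_8 (γ : ℝ) (hγ : 0 < γ) (μ : ℝ) (hμ : μ ∈ Set.Ioo (0 : ℝ) 1)
    (δ : ℝ) (hδ : δ ∈ Set.Ioo (0 : ℝ) 1) :
    ∃ ε : ℝ, ε ∈ Set.Ioo (μ / (γ + μ)) 1 ∧
      Hfun (γ / (γ / (μ * (1 - ε)) - 1)) μ = Real.log (δ / 2) / γ :=
  have log_neg : Real.log (δ / 2) < 0 := Real.log_neg (half_pos hδ.1) (by linarith [hδ.2])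
  stmt_8_general hγ hμ (div_neg_of_neg_of_pos log_neg hγ)
end
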